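/- Let f : ℝ^d → ℝ be L-smooth and convex with minimizer x*, R₀ ≥ ‖x⁰ − x*‖, and 0 < γ ≤ 1/(4L). Let (F_k)_{k≥0} be a filtration and, for k = 0, …, K−1, let x^k be F_k-measurable, δ̂_k be nonnegative F_k-measurable, and ĝ^k, ḡ^k random vectors with conditional properties E[ḡ^k | F_k] = ∇f(x^k), E[‖ĝ^k − ḡ^k‖² | F_k] ≤ C·δ̂_k·σ², E[‖ĝ^k‖² | F_k] ≤ 2C·δ̂_k·σ² + 2‖∇f(x^k)‖² + 2σ²/N, and x^{k+1} = x^k − γ·ĝ^k. Suppose also: (i) 2γ²σ²K/N ≤ R₀²/3, (ii) 2√2·γ·√C·σ·R₀·∑_{k=0}^{K−1}√(E[δ̂_k]) ≤ R₀²/3, and (iii) 2γ²·C·σ²·∑_{k=0}^{K−1}E[δ̂_k] ≤ R₀²/3. Then E[f(x̄^K) − f(x*)] ≤ 2R₀²/(γK), where x̄^K = (1/K)·∑_{k=0}^{K−1} x^k. -/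

import Mathlib

open MeasureTheory ProbabilityTheory

noncomputable section

lemma aux_hasDeriv {d : ℕ} (f : EuclideanSpace ℝ (Fin d) → ℝ) (hdiff : Differentiable ℝ f)
    (y v : EuclideanSpace ℝ (Fin d)) (t : ℝ) :
    HasDerivAt (fun s : ℝ => f (y + s • v)) (inner ℝ (gradient f (y + t • v)) v) t := by
  have h1 : HasFDerivAt f (InnerProductSpace.toDual ℝ _ (gradient f (y + t • v))) (y + t • v) :=
    (hdiff _).hasGradientAt.hasFDerivAt
  have h2 : HasDerivAt (fun s : ℝ => y + s • v) v t := by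
    simpa using ((hasDerivAt_id t).smul_const v).const_add y
  have := h1.comp_hasDerivAt t h2
  rw [InnerProductSpace.toDual_apply_apply] at this
  exact this

lemma aux_convex {d : ℕ} (f : EuclideanSpace ℝ (Fin d) → ℝ) (hdiff : Differentiable ℝ f)
    (hconv : ConvexOn ℝ Set.univ f) (y z : EuclideanSpace ℝ (Fin d)) :
    f y - f z ≤ inner ℝ (y - z) (gradient f y) := by
  have hc : ConvexOn ℝ Set.univ (fun s : ℝ => f (y + s • (z - y))) := by
    refine ⟨convex_univ, ?_⟩
    intro a _ b _ p q hp hq hpq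
    have := hconv.2 (Set.mem_univ (y + a • (z - y))) (Set.mem_univ (y + b • (z - y))) hp hq hpq
    convert this using 2
    have hq' : q = 1 - p := by linarith
    subst hq'
    simp only [smul_eq_mul]
    module
  have hd := aux_hasDeriv f hdiff y (z - y) 0
  have := hc.le_slope_of_hasDerivAt (Set.mem_univ (0 : ℝ)) (Set.mem_univ (1 : ℝ)) one_pos hd
  simp only [slope, zero_smul, add_zero, one_smul, sub_zero, inv_one, vsub_eq_sub,
    add_sub_cancel] at this
  have e : inner ℝ (y - z) (gradient f y) = - inner ℝ (gradient f y) (z - y) := by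
    rw [real_inner_comm, ← inner_neg_right, neg_sub]
  rw [e]; linarith

lemma aux_smooth {d : ℕ} (f : EuclideanSpace ℝ (Fin d) → ℝ) (L : ℝ) (hL : 0 < L)
    (hdiff : Differentiable ℝ f)
    (hsmooth : ∀ y z, ‖gradient f y - gradient f z‖ ≤ L * ‖y - z‖)
    (m : ℝ) (hmin : ∀ y, m ≤ f y) (y : EuclideanSpace ℝ (Fin d)) :
    ‖gradient f y‖ ^ 2 ≤ 2 * L * (f y - m) := by
  have key : ∀ v, f (y + v) ≤ f y + inner ℝ (gradient f y) v + L / 2 * ‖v‖ ^ 2 := by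
    intro v
    have h := image_le_of_deriv_right_le_deriv_boundary (f := fun s : ℝ => f (y + s • v))
      (f' := fun t => inner ℝ (gradient f (y + t • v)) v) (a := 0) (b := 1)
      (fun t _ => (aux_hasDeriv f hdiff y v t).continuousAt.continuousWithinAt)
      (fun t _ => (aux_hasDeriv f hdiff y v t).hasDerivWithinAt)
      (B := fun t => f y + t * inner ℝ (gradient f y) v + L / 2 * ‖v‖ ^ 2 * t ^ 2)
      (B' := fun t => inner ℝ (gradient f y) v + L / 2 * ‖v‖ ^ 2 * (2 * t))
      (by simp) (by fun_prop)
      (fun t _ => by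
        have h1 := (((hasDerivAt_id t).mul_const (inner ℝ (gradient f y) v)).const_add (f y)).add
          (((hasDerivAt_id t).pow 2).const_mul (L / 2 * ‖v‖ ^ 2))
        refine HasDerivAt.hasDerivWithinAt ?_
        have e : (1 * inner ℝ (gradient f y) v
            + L / 2 * ‖v‖ ^ 2 * (((2 : ℕ) : ℝ) * id t ^ (2 - 1) * 1))
            = inner ℝ (gradient f y) v + L / 2 * ‖v‖ ^ 2 * (2 * t) := by
          norm_num
        rw [e] at h1
        exact h1)
      (fun t ht => by
        have h1 : inner ℝ (gradient f (y + t • v) - gradient f y) v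
            ≤ (L * (t * ‖v‖)) * ‖v‖ := by
          refine (real_inner_le_norm _ _).trans ?_
          refine mul_le_mul_of_nonneg_right ((hsmooth _ _).trans ?_) (norm_nonneg _)
          rw [add_sub_cancel_left, norm_smul, Real.norm_of_nonneg ht.1]
        rw [inner_sub_left] at h1
        nlinarith)
      (x := 1) (by simp)
    simpa using h
  have h := (hmin _).trans (key (-(L⁻¹ • gradient f y)))
  rw [inner_neg_right, inner_smul_right, real_inner_self_eq_norm_sq, norm_neg, norm_smul,
    Real.norm_of_nonneg (inv_nonneg.2 hL.le)] at h
  have e : L / 2 * (L⁻¹ * ‖gradient f y‖) ^ 2 = L⁻¹ * ‖gradient f y‖ ^ 2 / 2 := by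
    field_simp
  rw [e] at h
  have h2 : L⁻¹ * ‖gradient f y‖ ^ 2 ≤ 2 * (f y - m) := by linarith
  have h3 := mul_le_mul_of_nonneg_left h2 hL.le
  rw [mul_inv_cancel_left₀ hL.ne'] at h3
  linarith

lemma aux_int {Ω : Type*} {m0 : MeasurableSpace Ω} (P : Measure Ω) {d : ℕ}
    (u v : Ω → EuclideanSpace ℝ (Fin d)) (hu : MemLp u 2 P) (hv : MemLp v 2 P) :
    Integrable (fun ω => inner ℝ (u ω) (v ω)) P := by
  refine (hu.norm.integrable_mul hv.norm).mono' (hu.1.inner hv.1) (ae_of_all _ fun ω => ?_)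
  exact abs_real_inner_le_norm (u ω) (v ω)

lemma aux_cs {Ω : Type*} {m0 : MeasurableSpace Ω} (P : Measure Ω) {d : ℕ}
    (u v : Ω → EuclideanSpace ℝ (Fin d)) (hu : MemLp u 2 P) (hv : MemLp v 2 P) :
    -∫ ω, inner ℝ (u ω) (v ω) ∂P
      ≤ Real.sqrt (∫ ω, ‖u ω‖ ^ 2 ∂P) * Real.sqrt (∫ ω, ‖v ω‖ ^ 2 ∂P) := by
  have h := integral_mul_le_Lp_mul_Lq_of_nonneg (μ := P) (Real.HolderConjugate.two_two)
    (f := fun ω => ‖u ω‖) (g := fun ω => ‖v ω‖)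
    (ae_of_all _ fun _ => norm_nonneg _) (ae_of_all _ fun _ => norm_nonneg _)
    (by simpa using hu.norm) (by simpa using hv.norm)
  simp only [Real.rpow_two, ← Real.sqrt_eq_rpow] at h
  refine le_trans ?_ h
  rw [← integral_neg]
  refine integral_mono (aux_int P u v hu hv).neg (hu.norm.integrable_mul hv.norm) ?_
  intro ω
  have := abs_real_inner_le_norm (u ω) (v ω)
  exact (neg_le_abs _).trans this

/-- Convex convergence guarantee for BTARD-SGD: under the per-step
conditional bounds and the three stepsize conditions encoding the paper's stepsize choice,
the averaged iterate satisfies `E[f(x̄^K) − f(x*)] ≤ 2R₀²/(γK)`. -/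
theorem btard_sgd_convex_convergence
    {Ω : Type*} {m0 : MeasurableSpace Ω} (P : Measure Ω) [IsProbabilityMeasure P]
    (ℱ : Filtration ℕ m0) {d : ℕ}
    (f : EuclideanSpace ℝ (Fin d) → ℝ) (L : ℝ) (hL : 0 < L)
    (hdiff : Differentiable ℝ f)
    (hsmooth : ∀ y z, ‖gradient f y - gradient f z‖ ≤ L * ‖y - z‖)
    (hconv : ConvexOn ℝ Set.univ f)
    (xstar : EuclideanSpace ℝ (Fin d)) (hmin : ∀ y, f xstar ≤ f y)
    (K N : ℕ) (hK : 0 < K) (hN : 1 ≤ N)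
    (γ C σ R₀ : ℝ) (hγ : 0 < γ) (hγL : γ ≤ 1 / (4 * L)) (hC : 0 ≤ C) (hσ : 0 ≤ σ)
    (x0 : EuclideanSpace ℝ (Fin d)) (hR₀ : ‖x0 - xstar‖ ≤ R₀)
    (x ghat gbar : ℕ → Ω → EuclideanSpace ℝ (Fin d)) (δhat : ℕ → Ω → ℝ)
    (hx0 : x 0 = fun _ => x0)
    (hxmeas : ∀ k < K, StronglyMeasurable[ℱ k] (x k))
    (hδmeas : ∀ k < K, StronglyMeasurable[ℱ k] (δhat k))
    (hδnonneg : ∀ k < K, ∀ ω, 0 ≤ δhat k ω)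
    (hδint : ∀ k < K, Integrable (δhat k) P)
    (hgbarint : ∀ k < K, Integrable (gbar k) P)
    (hghatint : ∀ k < K, Integrable (ghat k) P)
    (hdevint : ∀ k < K, Integrable (fun ω => ‖ghat k ω - gbar k ω‖ ^ 2) P)
    (hsecint : ∀ k < K, Integrable (fun ω => ‖ghat k ω‖ ^ 2) P)
    (hfint : ∀ k < K, Integrable (fun ω => f (x k ω)) P)
    (hgradint : ∀ k < K, Integrable (fun ω => ‖gradient f (x k ω)‖ ^ 2) P)
    (hmean : ∀ k < K, P[gbar k|ℱ k] =ᵐ[P] fun ω => gradient f (x k ω))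
    (hdev : ∀ k < K, ∀ᵐ ω ∂P,
      (P[fun ω' => ‖ghat k ω' - gbar k ω'‖ ^ 2|ℱ k]) ω ≤ C * δhat k ω * σ ^ 2)
    (hsec : ∀ k < K, ∀ᵐ ω ∂P,
      (P[fun ω' => ‖ghat k ω'‖ ^ 2|ℱ k]) ω
        ≤ 2 * C * δhat k ω * σ ^ 2 + 2 * ‖gradient f (x k ω)‖ ^ 2 + 2 * σ ^ 2 / N)
    (hupd : ∀ k < K, ∀ ω, x (k + 1) ω = x k ω - γ • ghat k ω)
    (hcond1 : 2 * γ ^ 2 * σ ^ 2 * K / N ≤ R₀ ^ 2 / 3)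
    (hcond2 : 2 * Real.sqrt 2 * γ * Real.sqrt C * σ * R₀ *
        ∑ k ∈ Finset.range K, Real.sqrt (∫ ω, δhat k ω ∂P) ≤ R₀ ^ 2 / 3)
    (hcond3 : 2 * γ ^ 2 * C * σ ^ 2 *
        ∑ k ∈ Finset.range K, (∫ ω, δhat k ω ∂P) ≤ R₀ ^ 2 / 3) :
    (∫ ω, f ((K : ℝ)⁻¹ • ∑ k ∈ Finset.range K, x k ω) ∂P) - f xstar
      ≤ 2 * R₀ ^ 2 / (γ * K) := by
  have hR : 0 ≤ R₀ := (norm_nonneg _).trans hR₀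
  have hxL : ∀ k ≤ K, MemLp (fun ω => x k ω - xstar) 2 P := by
    intro k
    induction k with
    | zero => intro _; rw [hx0]; exact memLp_const _
    | succ k ih =>
      intro hk
      have h1 : MemLp (ghat k) 2 P :=
        (memLp_two_iff_integrable_sq_norm (hghatint k hk).1).2 (hsecint k hk)
      have h2 := (ih (by omega)).sub (h1.const_smul γ)
      refine h2.congr_norm ?_ (ae_of_all _ fun ω => ?_)
      · refine h2.1.congr (ae_of_all _ fun ω => ?_)
        simp only [Pi.sub_apply, Pi.smul_apply]
        rw [hupd k hk]; abel
      · simp only [Pi.sub_apply, Pi.smul_apply]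
        rw [hupd k hk]; congr 1; abel
  have hstep : ∀ k < K, (∫ ω, ‖x (k + 1) ω - xstar‖ ^ 2 ∂P) ≤ (∫ ω, ‖x k ω - xstar‖ ^ 2 ∂P)
      - γ * (∫ ω, (f (x k ω) - f xstar) ∂P)
      + 2 * γ * (Real.sqrt (∫ ω, ‖x k ω - xstar‖ ^ 2 ∂P) *
          (Real.sqrt C * σ * Real.sqrt (∫ ω, δhat k ω ∂P)))
      + γ ^ 2 * (2 * C * σ ^ 2 * (∫ ω, δhat k ω ∂P) + 2 * σ ^ 2 / N) := by
    intro k hk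
    have hu := hxL k hk.le
    have hg : MemLp (ghat k) 2 P :=
      (memLp_two_iff_integrable_sq_norm (hghatint k hk).1).2 (hsecint k hk)
    have hw : MemLp (fun ω => ghat k ω - gbar k ω) 2 P :=
      (memLp_two_iff_integrable_sq_norm ((hghatint k hk).1.sub (hgbarint k hk).1)).2 (hdevint k hk)
    have hb : MemLp (gbar k) 2 P := by
      have := hg.sub hw
      refine this.ae_eq (ae_of_all _ fun ω => ?_)
      simp
    have hu2 : Integrable (fun ω => ‖x k ω - xstar‖ ^ 2) P :=
      (memLp_two_iff_integrable_sq_norm hu.1).1 hu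
    have iw : Integrable (fun ω => inner ℝ (x k ω - xstar) (ghat k ω - gbar k ω)) P :=
      aux_int P _ _ hu hw
    have ib : Integrable (fun ω => inner ℝ (x k ω - xstar) (gbar k ω)) P :=
      aux_int P _ _ hu hb
    have hfi : Integrable (fun ω => f (x k ω) - f xstar) P :=
      (hfint k hk).sub (integrable_const _)
    -- expansion
    have e1 : (∫ ω, ‖x (k + 1) ω - xstar‖ ^ 2 ∂P) = (∫ ω, ‖x k ω - xstar‖ ^ 2 ∂P)
        - 2 * γ * (∫ ω, inner ℝ (x k ω - xstar) (gbar k ω) ∂P)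
        - 2 * γ * (∫ ω, inner ℝ (x k ω - xstar) (ghat k ω - gbar k ω) ∂P)
        + γ ^ 2 * (∫ ω, ‖ghat k ω‖ ^ 2 ∂P) := by
      have j1 : Integrable (fun ω => ‖x k ω - xstar‖ ^ 2
          - 2 * γ * inner ℝ (x k ω - xstar) (gbar k ω)) P := hu2.sub (ib.const_mul _)
      have j2 : Integrable (fun ω => ‖x k ω - xstar‖ ^ 2
          - 2 * γ * inner ℝ (x k ω - xstar) (gbar k ω)
          - 2 * γ * inner ℝ (x k ω - xstar) (ghat k ω - gbar k ω)) P := j1.sub (iw.const_mul _)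
      rw [← integral_const_mul, ← integral_const_mul, ← integral_const_mul,
        ← integral_sub hu2 (ib.const_mul _),
        ← integral_sub j1 (iw.const_mul _),
        ← integral_add j2 ((hsecint k hk).const_mul _)]
      refine integral_congr_ae (ae_of_all _ fun ω => ?_)
      have : x (k + 1) ω - xstar = (x k ω - xstar) - γ • ghat k ω := by
        rw [hupd k hk]; abel
      simp only [this, norm_sub_sq_real, inner_smul_right, inner_sub_right, norm_smul,
        Real.norm_eq_abs, mul_pow, sq_abs]
      ring
    -- second moment
    have e2 : (∫ ω, ‖ghat k ω‖ ^ 2 ∂P) ≤ 2 * C * σ ^ 2 * (∫ ω, δhat k ω ∂P)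
        + 2 * (∫ ω, ‖gradient f (x k ω)‖ ^ 2 ∂P) + 2 * σ ^ 2 / N := by
      rw [← integral_condExp (ℱ.le k)]
      have i1 : Integrable (fun ω => 2 * C * δhat k ω * σ ^ 2) P :=
        ((hδint k hk).const_mul _).mul_const _
      have i2 := (hgradint k hk).const_mul 2
      have i3 : Integrable (fun ω => 2 * C * δhat k ω * σ ^ 2
          + 2 * ‖gradient f (x k ω)‖ ^ 2) P := i1.add i2
      refine (integral_mono_ae integrable_condExp
        (i3.add (integrable_const (2 * σ ^ 2 / (N : ℝ)))) (hsec k hk)).trans (le_of_eq ?_)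
      simp only [Pi.add_apply]
      rw [integral_add i3 (integrable_const _), integral_add i1 i2, integral_mul_const,
        integral_const_mul, integral_const_mul]
      simp
      ring
    have e3 : (∫ ω, ‖ghat k ω - gbar k ω‖ ^ 2 ∂P) ≤ C * σ ^ 2 * (∫ ω, δhat k ω ∂P) := by
      rw [← integral_condExp (ℱ.le k)]
      refine (integral_mono_ae integrable_condExp
        (((hδint k hk).const_mul _).mul_const _) (hdev k hk)).trans (le_of_eq ?_)
      rw [integral_mul_const, integral_const_mul]
      ring
    have e4 : (∫ ω, ‖gradient f (x k ω)‖ ^ 2 ∂P) ≤ 2 * L * (∫ ω, (f (x k ω) - f xstar) ∂P) := by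
      rw [← integral_const_mul]
      exact integral_mono (hgradint k hk) (hfi.const_mul _)
        (fun ω => aux_smooth f L hL hdiff hsmooth _ hmin _)
    have hpull : (P[fun ω => inner ℝ (x k ω - xstar) (gbar k ω)|ℱ k])
        =ᵐ[P] fun ω => inner ℝ (x k ω - xstar) (gradient f (x k ω)) := by
      have h := condExp_bilin_of_stronglyMeasurable_left (μ := P) (m := ℱ k)
        (innerSL ℝ (E := EuclideanSpace ℝ (Fin d))) (f := fun ω => x k ω - xstar) (g := gbar k)
        ((hxmeas k hk).sub stronglyMeasurable_const) ib (hgbarint k hk)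
      filter_upwards [h, hmean k hk] with ω h1 h2
      rw [h2] at h1
      exact h1
    have e5 : (∫ ω, (f (x k ω) - f xstar) ∂P)
        ≤ ∫ ω, inner ℝ (x k ω - xstar) (gbar k ω) ∂P := by
      rw [← integral_condExp (ℱ.le k) (f := fun ω => inner ℝ (x k ω - xstar) (gbar k ω))]
      refine integral_mono_ae hfi integrable_condExp ?_
      filter_upwards [hpull] with ω h1
      rw [h1]
      exact aux_convex f hdiff hconv _ _
    have e6 := aux_cs P (fun ω => x k ω - xstar) (fun ω => ghat k ω - gbar k ω) hu hw
    have e7 : Real.sqrt (∫ ω, ‖ghat k ω - gbar k ω‖ ^ 2 ∂P)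
        ≤ Real.sqrt C * σ * Real.sqrt (∫ ω, δhat k ω ∂P) := by
      refine (Real.sqrt_le_sqrt e3).trans (le_of_eq ?_)
      rw [Real.sqrt_mul (by positivity), Real.sqrt_mul hC, Real.sqrt_sq hσ]
    have e8 : 0 ≤ ∫ ω, (f (x k ω) - f xstar) ∂P :=
      integral_nonneg fun ω => sub_nonneg.2 (hmin _)
    have e9 := e6.trans (mul_le_mul_of_nonneg_left e7 (Real.sqrt_nonneg _))
    have hγL' : γ * (4 * L) ≤ 1 := by
      rwa [le_div_iff₀ (by positivity)] at hγL
    have e10 : γ ^ 2 * (2 * (2 * L * (∫ ω, (f (x k ω) - f xstar) ∂P)))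
        ≤ γ * (∫ ω, (f (x k ω) - f xstar) ∂P) := by
      have := mul_le_mul_of_nonneg_left hγL' (mul_nonneg hγ.le e8)
      linarith
    have e11 := mul_le_mul_of_nonneg_left e2 (sq_nonneg γ)
    have e12 := mul_le_mul_of_nonneg_left e4 (sq_nonneg γ)
    have e13 := mul_le_mul_of_nonneg_left e5 hγ.le
    have e14 := mul_le_mul_of_nonneg_left e9 hγ.le
    rw [e1]
    linarith
  -- abstract real sequences
  obtain ⟨a, ha⟩ : ∃ a : ℕ → ℝ, a = fun k => ∫ ω, ‖x k ω - xstar‖ ^ 2 ∂P := ⟨_, rfl⟩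
  obtain ⟨r, hr⟩ : ∃ r : ℕ → ℝ, r = fun k => ∫ ω, (f (x k ω) - f xstar) ∂P := ⟨_, rfl⟩
  obtain ⟨D, hD⟩ : ∃ D : ℕ → ℝ, D = fun k => ∫ ω, δhat k ω ∂P := ⟨_, rfl⟩
  have hr0 : ∀ k, 0 ≤ r k := by
    intro k; rw [hr]; exact integral_nonneg fun ω => sub_nonneg.2 (hmin _)
  have ha0 : ∀ k, 0 ≤ a k := by
    intro k; rw [ha]; exact integral_nonneg fun ω => sq_nonneg _
  have hD0 : ∀ k < K, 0 ≤ D k := by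
    intro k hk; rw [hD]; exact integral_nonneg fun ω => hδnonneg k hk _
  have hstep' : ∀ k < K, a (k + 1) ≤ a k - γ * r k
      + 2 * γ * (Real.sqrt (a k) * (Real.sqrt C * σ * Real.sqrt (D k)))
      + γ ^ 2 * (2 * C * σ ^ 2 * D k + 2 * σ ^ 2 / N) := by
    rw [ha, hr, hD]; exact hstep
  have hc2 : 2 * Real.sqrt 2 * γ * Real.sqrt C * σ * R₀ *
        ∑ k ∈ Finset.range K, Real.sqrt (D k) ≤ R₀ ^ 2 / 3 := by rw [hD]; exact hcond2
  have hc3 : 2 * γ ^ 2 * C * σ ^ 2 * ∑ k ∈ Finset.range K, D k ≤ R₀ ^ 2 / 3 := by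
    rw [hD]; exact hcond3
  have ha00 : a 0 ≤ R₀ ^ 2 := by
    rw [ha]; simp only [hx0]; simp
    gcongr
  have hmain : ∀ T ≤ K, a T + γ * ∑ k ∈ Finset.range T, r k ≤ R₀ ^ 2
      + 2 * Real.sqrt 2 * γ * Real.sqrt C * σ * R₀ * ∑ k ∈ Finset.range T, Real.sqrt (D k)
      + 2 * γ ^ 2 * C * σ ^ 2 * ∑ k ∈ Finset.range T, D k
      + 2 * γ ^ 2 * σ ^ 2 * T / N := by
    intro T
    induction T with
    | zero => intro _; simpa using ha00
    | succ T ih =>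
      intro hT
      have ih := ih (by omega)
      have b1 : ∑ k ∈ Finset.range T, Real.sqrt (D k) ≤ ∑ k ∈ Finset.range K, Real.sqrt (D k) :=
        Finset.sum_le_sum_of_subset_of_nonneg (Finset.range_mono (by omega))
          fun _ _ _ => Real.sqrt_nonneg _
      have b2 : ∑ k ∈ Finset.range T, D k ≤ ∑ k ∈ Finset.range K, D k :=
        Finset.sum_le_sum_of_subset_of_nonneg (Finset.range_mono (by omega))
          fun k hk _ => hD0 k (Finset.mem_range.1 hk)
      have b3 : 2 * γ ^ 2 * σ ^ 2 * T / N ≤ 2 * γ ^ 2 * σ ^ 2 * K / N := by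
        have : (T : ℝ) ≤ K := by exact_mod_cast (by omega : T ≤ K)
        gcongr
      have b4 := mul_le_mul_of_nonneg_left b1
        (show 0 ≤ 2 * Real.sqrt 2 * γ * Real.sqrt C * σ * R₀ by positivity)
      have b5 := mul_le_mul_of_nonneg_left b2 (show 0 ≤ 2 * γ ^ 2 * C * σ ^ 2 by positivity)
      have b6 : 0 ≤ γ * ∑ k ∈ Finset.range T, r k :=
        mul_nonneg hγ.le (Finset.sum_nonneg fun k _ => hr0 k)
      have haT : a T ≤ 2 * R₀ ^ 2 := by linarith
      have hs : Real.sqrt (a T) ≤ Real.sqrt 2 * R₀ := by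
        refine (Real.sqrt_le_sqrt haT).trans (le_of_eq ?_)
        rw [Real.sqrt_mul (by norm_num), Real.sqrt_sq hR]
      have b7 := mul_le_mul_of_nonneg_left (mul_le_mul_of_nonneg_right hs
        (show 0 ≤ Real.sqrt C * σ * Real.sqrt (D T) by positivity))
        (show 0 ≤ 2 * γ by positivity)
      have b8 := hstep' T (by omega)
      have b9 : 2 * γ ^ 2 * σ ^ 2 * ((T + 1 : ℕ) : ℝ) / N
          = 2 * γ ^ 2 * σ ^ 2 * T / N + γ ^ 2 * (2 * σ ^ 2 / N) := by
        push_cast; ring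
      rw [Finset.sum_range_succ, Finset.sum_range_succ, Finset.sum_range_succ, b9]
      linarith
  have hfin : γ * ∑ k ∈ Finset.range K, r k ≤ 2 * R₀ ^ 2 := by
    have := hmain K le_rfl
    have := ha0 K
    linarith
  have hK' : (0 : ℝ) < K := by exact_mod_cast hK
  have hjen : ∀ ω, f ((K : ℝ)⁻¹ • ∑ k ∈ Finset.range K, x k ω)
      ≤ (K : ℝ)⁻¹ * ∑ k ∈ Finset.range K, f (x k ω) := by
    intro ω
    have := hconv.map_sum_le (t := Finset.range K) (w := fun _ => (K : ℝ)⁻¹)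
      (p := fun k => x k ω) (fun _ _ => by positivity)
      (by simp [hK'.ne']) (fun _ _ => Set.mem_univ _)
    simpa [Finset.smul_sum, Finset.mul_sum] using this
  have isum : Integrable (fun ω => (K : ℝ)⁻¹ * ∑ k ∈ Finset.range K, (f (x k ω) - f xstar)) P :=
    (integrable_finsetSum _ fun k hk =>
      (hfint k (Finset.mem_range.1 hk)).sub (integrable_const _)).const_mul _
  have hjen' : ∀ ω, f ((K : ℝ)⁻¹ • ∑ k ∈ Finset.range K, x k ω) - f xstar
      ≤ (K : ℝ)⁻¹ * ∑ k ∈ Finset.range K, (f (x k ω) - f xstar) := by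
    intro ω
    rw [Finset.sum_sub_distrib, mul_sub]
    simp only [Finset.sum_const, Finset.card_range, nsmul_eq_mul]
    rw [inv_mul_cancel_left₀ hK'.ne']
    linarith [hjen ω]
  have hmeas : AEStronglyMeasurable
      (fun ω => f ((K : ℝ)⁻¹ • ∑ k ∈ Finset.range K, x k ω)) P := by
    refine hdiff.continuous.comp_aestronglyMeasurable ?_
    refine AEStronglyMeasurable.fun_const_smul ?_ _
    refine Finset.aestronglyMeasurable_fun_sum _ fun k hk => ?_
    exact ((hxmeas k (Finset.mem_range.1 hk)).mono (ℱ.le k)).aestronglyMeasurable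
  have iav : Integrable
      (fun ω => f ((K : ℝ)⁻¹ • ∑ k ∈ Finset.range K, x k ω) - f xstar) P := by
    refine isum.mono' (hmeas.sub aestronglyMeasurable_const) (ae_of_all _ fun ω => ?_)
    rw [Real.norm_of_nonneg (sub_nonneg.2 (hmin _))]
    exact hjen' ω
  have iav' : Integrable (fun ω => f ((K : ℝ)⁻¹ • ∑ k ∈ Finset.range K, x k ω)) P := by
    refine (iav.add (integrable_const (f xstar))).congr (ae_of_all _ fun ω => ?_)
    simp
  have h1 : (∫ ω, f ((K : ℝ)⁻¹ • ∑ k ∈ Finset.range K, x k ω) ∂P) - f xstar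
      = ∫ ω, (f ((K : ℝ)⁻¹ • ∑ k ∈ Finset.range K, x k ω) - f xstar) ∂P := by
    rw [integral_sub iav' (integrable_const _)]; simp
  have h2 : (∫ ω, (K : ℝ)⁻¹ * ∑ k ∈ Finset.range K, (f (x k ω) - f xstar) ∂P)
      = (K : ℝ)⁻¹ * ∑ k ∈ Finset.range K, r k := by
    rw [integral_const_mul, integral_finsetSum, hr]
    exact fun k hk => (hfint k (Finset.mem_range.1 hk)).sub (integrable_const _)
  rw [h1]
  refine (integral_mono iav isum hjen').trans ?_
  rw [h2, le_div_iff₀ (by positivity)]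
  calc (K : ℝ)⁻¹ * (∑ k ∈ Finset.range K, r k) * (γ * K)
      = γ * ∑ k ∈ Finset.range K, r k := by field_simp
    _ ≤ _ := hfin
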